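/- Adding the normalized directions (2,1)/√5, (1,2)/√5, (2,-1)/√5, (1,-2)/√5 to the width-1 grid directions in R² gives directional resolution dθ = arctan(1/2)/2, and tan²(arctan(1/2)/2) = (√5 - 2)². -/

import Mathlib

open Real

/-!
In polar coordinates the angle between two unit vectors is the distance between their polar angles
modulo `2π`. So if a finite family of directions has polar angles `θ₀ ≤ ⋯ ≤ θₙ = θ₀ + 2π`, every
direction lies within half the largest gap of some member, and the bisector of the largest gap
attains this bound. In the width-2 stencil the gaps are `arctan (1/2)` and
`π/4 - arctan (1/2) = arctan (1/3)`.
-/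

/-- The unit vector with polar angle `θ`. -/
noncomputable def polarDirection (θ : ℝ) : ℝ × ℝ := (cos θ, sin θ)

/-- The angle between a unit vector `w` and the nearest member of a family `V` of unit vectors. -/
noncomputable def angleToNearest {ι : Type*} (V : ι → ℝ × ℝ) (w : ℝ × ℝ) : ℝ :=
  ⨅ i, arccos (w.1 * (V i).1 + w.2 * (V i).2)

/-- `r` is the directional resolution of the family `V` of unit vectors: the largest angle between
a unit vector and the member of `V` nearest to it, where the maximum is required to be attained. -/
def IsDirectionalResolution {ι : Type*} (V : ι → ℝ × ℝ) (r : ℝ) : Prop :=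
  IsGreatest {y | ∃ w : ℝ × ℝ, w.1 ^ 2 + w.2 ^ 2 = 1 ∧ y = angleToNearest V w} r

section Trigonometry

lemma exists_mem_Ico_polarDirection_eq {w : ℝ × ℝ} (hw : w.1 ^ 2 + w.2 ^ 2 = 1) (a : ℝ) :
    ∃ φ ∈ Set.Ico a (a + 2 * π), polarDirection φ = w := by
  have hnorm : ‖(⟨w.1, w.2⟩ : ℂ)‖ = 1 := by
    rw [Complex.norm_def, Complex.normSq_mk, ← sq, ← sq, hw, sqrt_one]
  obtain ⟨ψ, hψ⟩ := (Complex.norm_eq_one_iff _).1 hnorm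
  have hperiodic : Function.Periodic polarDirection (2 * π) := fun θ ↦ by simp [polarDirection]
  obtain ⟨φ, hφ, hψφ⟩ := hperiodic.exists_mem_Ico two_pi_pos ψ a
  refine ⟨φ, hφ, hψφ.symm.trans (Prod.ext ?_ ?_)⟩
  · simpa [polarDirection] using congrArg Complex.re hψ
  · simpa [polarDirection] using congrArg Complex.im hψ

lemma arccos_cos_le_abs (x : ℝ) : arccos (cos x) ≤ |x| := by
  rcases le_total |x| π with hx | hx
  · rw [← cos_abs, arccos_cos (abs_nonneg x) hx]
  · exact (arccos_le_pi _).trans hx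

lemma le_arccos_cos {r x : ℝ} (hx : x ∈ Set.Icc r (2 * π - r)) : r ≤ arccos (cos x) := by
  rcases le_total r 0 with hr | hr
  · exact hr.trans (arccos_nonneg _)
  have hcos : cos x ≤ cos r := by
    rcases le_total x π with hxπ | hxπ
    · exact cos_le_cos_of_nonneg_of_le_pi hr hxπ hx.1
    · rw [← cos_two_pi_sub]
      exact cos_le_cos_of_nonneg_of_le_pi hr (by linarith) (by linarith [hx.2])
  calc r = arccos (cos r) := (arccos_cos hr (by linarith [hx.1, hx.2])).symm
    _ ≤ arccos (cos x) := arccos_le_arccos hcos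

lemma tan_div_two_eq (x : ℝ) : tan (x / 2) = (1 - cos x) / sin x := by
  obtain ⟨y, rfl⟩ : ∃ y, x = 2 * y := ⟨x / 2, by ring⟩
  rw [mul_div_cancel_left₀ y two_ne_zero, tan_eq_sin_div_cos, sin_two_mul, cos_two_mul']
  have hnum : 1 - (cos y ^ 2 - sin y ^ 2) = 2 * sin y * sin y := by
    linear_combination -cos_sq_add_sin_sq y
  rcases eq_or_ne (sin y) 0 with hy | hy
  · simp [hy]
  · rw [hnum, mul_div_mul_left _ _ (mul_ne_zero two_ne_zero hy)]

end Trigonometry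

section GapCriterion

lemma angleToNearest_polarDirection {ι : Type*} (θ : ι → ℝ) (φ : ℝ) :
    angleToNearest (polarDirection ∘ θ) (polarDirection φ) = ⨅ i, arccos (cos (φ - θ i)) := by
  simp only [angleToNearest, polarDirection, Function.comp_apply, cos_sub]

lemma angleToNearest_polarDirection_le_abs_sub {ι : Type*} (θ : ι → ℝ) (φ : ℝ) (i : ι) :
    angleToNearest (polarDirection ∘ θ) (polarDirection φ) ≤ |φ - θ i| := by
  rw [angleToNearest_polarDirection]
  have hbdd : BddBelow (Set.range fun j ↦ arccos (cos (φ - θ j))) :=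
    ⟨0, Set.forall_mem_range.2 fun _ ↦ arccos_nonneg _⟩
  exact (ciInf_le hbdd i).trans (arccos_cos_le_abs _)

lemma exists_castSucc_le_lt_succ {α : Type*} [LinearOrder α] {n : ℕ} {θ : Fin (n + 1) → α} {x : α}
    (hx : x ∈ Set.Ico (θ 0) (θ (Fin.last n))) : ∃ k : Fin n, θ k.castSucc ≤ x ∧ x < θ k.succ := by
  by_contra! h
  have hle (j : Fin (n + 1)) : θ j ≤ x := j.induction hx.1 h
  exact hx.2.not_ge (hle _)

variable {n : ℕ} {θ : Fin (n + 1) → ℝ}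

lemma exists_abs_sub_le_half_of_gap_le {δ φ : ℝ}
    (hgap : ∀ k : Fin n, θ k.succ - θ k.castSucc ≤ δ)
    (hφ : φ ∈ Set.Ico (θ 0) (θ (Fin.last n))) : ∃ j, |φ - θ j| ≤ δ / 2 := by
  obtain ⟨k, hkφ, hφk⟩ := exists_castSucc_le_lt_succ hφ
  have hk := hgap k
  rcases le_total (φ - θ k.castSucc) (δ / 2) with hleft | hright
  · exact ⟨k.castSucc, abs_le.2 ⟨by linarith, hleft⟩⟩
  · exact ⟨k.succ, abs_le.2 ⟨by linarith, by linarith⟩⟩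

lemma half_gap_le_angleToNearest_bisector (hmono : Monotone θ)
    (hturn : θ (Fin.last n) ≤ θ 0 + 2 * π) (k : Fin n) :
    (θ k.succ - θ k.castSucc) / 2 ≤
      angleToNearest (polarDirection ∘ θ) (polarDirection ((θ k.castSucc + θ k.succ) / 2)) := by
  rw [angleToNearest_polarDirection]
  have hfirst := hmono (Fin.zero_le k.castSucc)
  have hlast := hmono (Fin.le_last k.succ)
  refine le_ciInf fun j ↦ ?_
  rcases le_or_gt j k.castSucc with hjk | hkj
  · have hj := hmono hjk
    have hj₀ := hmono (Fin.zero_le j)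
    exact le_arccos_cos ⟨by linarith, by linarith⟩
  · have hj := hmono (Fin.castSucc_lt_iff_succ_le.1 hkj)
    have hjn := hmono (Fin.le_last j)
    rw [← cos_neg]
    exact le_arccos_cos ⟨by linarith, by linarith⟩

theorem isDirectionalResolution_half_max_gap {δ : ℝ} (hmono : Monotone θ)
    (hturn : θ (Fin.last n) = θ 0 + 2 * π)
    (hδ : IsGreatest (Set.range fun k : Fin n ↦ θ k.succ - θ k.castSucc) δ) :
    IsDirectionalResolution (polarDirection ∘ θ) (δ / 2) := by
  have hupper (w : ℝ × ℝ) (hw : w.1 ^ 2 + w.2 ^ 2 = 1) :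
      angleToNearest (polarDirection ∘ θ) w ≤ δ / 2 := by
    obtain ⟨φ, hφ, rfl⟩ := exists_mem_Ico_polarDirection_eq hw (θ 0)
    obtain ⟨j, hj⟩ := exists_abs_sub_le_half_of_gap_le
      (fun k ↦ hδ.2 (Set.mem_range_self k)) (hturn ▸ hφ)
    exact (angleToNearest_polarDirection_le_abs_sub θ φ j).trans hj
  obtain ⟨⟨k, rfl⟩, -⟩ := hδ
  refine ⟨⟨polarDirection ((θ k.castSucc + θ k.succ) / 2), cos_sq_add_sin_sq _, ?_⟩, ?_⟩
  · exact (half_gap_le_angleToNearest_bisector hmono hturn.le k).antisymm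
      (hupper _ (cos_sq_add_sin_sq _))
  · rintro _ ⟨w, hw, rfl⟩
    exact hupper w hw

lemma isDirectionalResolution_comp_iff_of_surjective {ι κ : Type*} {V : ι → ℝ × ℝ}
    {σ : κ → ι} {r : ℝ} (hσ : Function.Surjective σ) :
    IsDirectionalResolution (V ∘ σ) r ↔ IsDirectionalResolution V r := by
  have hangle (w : ℝ × ℝ) : angleToNearest (V ∘ σ) w = angleToNearest V w :=
    hσ.iInf_comp fun i ↦ arccos (w.1 * (V i).1 + w.2 * (V i).2)
  simp only [IsDirectionalResolution, hangle]

end GapCriterion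

section WidthTwoStencil

lemma cos_arctan_half : cos (arctan (1 / 2)) = 2 / √5 := by
  have hsqrt : √(1 + (1 / 2) ^ 2) = √5 / 2 := by
    rw [show (1 + (1 / 2) ^ 2 : ℝ) = 5 / 2 ^ 2 by norm_num, sqrt_div (by norm_num),
      sqrt_sq zero_le_two]
  rw [cos_arctan, hsqrt, one_div_div]

lemma sin_arctan_half : sin (arctan (1 / 2)) = 1 / √5 := by
  rw [← tan_mul_cos (cos_arctan_pos _).ne', tan_arctan, cos_arctan_half]
  ring

lemma tan_half_arctan_half : tan (arctan (1 / 2) / 2) = √5 - 2 := by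
  rw [tan_div_two_eq, cos_arctan_half, sin_arctan_half]
  field_simp

lemma pi_div_four_sub_arctan_half_mem_Icc :
    π / 4 - arctan (1 / 2) ∈ Set.Icc 0 (arctan (1 / 2)) := by
  have hdiff : π / 4 - arctan (1 / 2) = arctan 3⁻¹ := by
    rw [← arctan_inv_2_add_arctan_inv_3, one_div, add_sub_cancel_left]
  rw [hdiff]
  exact ⟨arctan_nonneg.2 (by norm_num), arctan_mono (by norm_num)⟩

/-- The polar angles of the width-2 stencil in increasing order from `-π` to `π`; both endpoints
are listed, so that consecutive entries give all angular gaps. -/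
noncomputable def widthTwoAngle : Fin 17 → ℝ :=
  ![-π, -(π - arctan (1 / 2)), -(π - π / 4), -(arctan (1 / 2) + π / 2),
    -(π / 2), -(π / 2 - arctan (1 / 2)), -(π / 4), -arctan (1 / 2),
    0, arctan (1 / 2), π / 4, π / 2 - arctan (1 / 2),
    π / 2, arctan (1 / 2) + π / 2, π - π / 4, π - arctan (1 / 2), π]

/-- The position, in the enumeration of the stencil used in `stmt_14`, of the direction with polar
angle `widthTwoAngle k`. -/
def widthTwoIndex : Fin 17 → Fin 16 :=
  ![2, 14, 7, 15, 3, 11, 6, 10, 0, 8, 4, 9, 1, 13, 5, 12, 2]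

lemma widthTwoIndex_surjective : Function.Surjective widthTwoIndex := by
  decide

lemma widthTwoAngle_gap (k : Fin 16) :
    widthTwoAngle k.succ - widthTwoAngle k.castSucc = arctan (1 / 2) ∨
      widthTwoAngle k.succ - widthTwoAngle k.castSucc = π / 4 - arctan (1 / 2) := by
  fin_cases k <;> simp only [widthTwoAngle, Fin.reduceFinMk, Fin.reduceSucc, Fin.reduceCastSucc,
    Matrix.cons_val] <;> grind

lemma widthTwoAngle_monotone : Monotone widthTwoAngle := by
  refine Fin.monotone_iff_le_succ.2 fun k ↦ ?_
  have hsmall := pi_div_four_sub_arctan_half_mem_Icc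
  rcases widthTwoAngle_gap k with hk | hk <;> linarith [hsmall.1, hsmall.2]

lemma isGreatest_widthTwoAngle_gap :
    IsGreatest (Set.range fun k : Fin 16 ↦ widthTwoAngle k.succ - widthTwoAngle k.castSucc)
      (arctan (1 / 2)) := by
  refine ⟨⟨8, ?_⟩, Set.forall_mem_range.2 fun k ↦ ?_⟩
  · simp [widthTwoAngle]
  · rcases widthTwoAngle_gap k with hk | hk
    · exact hk.le
    · exact hk.trans_le pi_div_four_sub_arctan_half_mem_Icc.2

lemma isDirectionalResolution_polarDirection_widthTwoAngle :
    IsDirectionalResolution (polarDirection ∘ widthTwoAngle) (arctan (1 / 2) / 2) :=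
  isDirectionalResolution_half_max_gap widthTwoAngle_monotone
    (show π = -π + 2 * π by ring) isGreatest_widthTwoAngle_gap

end WidthTwoStencil

/-- The width-2 stencil directions (width-1 directions together with the normalized
directions `(±2,±1)/√5, (±1,±2)/√5`) have directional resolution `dθ = arctan(1/2)/2`,
and `tan²(arctan(1/2)/2) = (√5 - 2)²`. -/
theorem stmt_14 (V : Fin 16 → ℝ × ℝ)
    (hV : V = ![(1, 0), (0, 1), (-1, 0), (0, -1),
      (1 / Real.sqrt 2, 1 / Real.sqrt 2), (-1 / Real.sqrt 2, 1 / Real.sqrt 2),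
      (1 / Real.sqrt 2, -1 / Real.sqrt 2), (-1 / Real.sqrt 2, -1 / Real.sqrt 2),
      (2 / Real.sqrt 5, 1 / Real.sqrt 5), (1 / Real.sqrt 5, 2 / Real.sqrt 5),
      (2 / Real.sqrt 5, -1 / Real.sqrt 5), (1 / Real.sqrt 5, -2 / Real.sqrt 5),
      (-2 / Real.sqrt 5, 1 / Real.sqrt 5), (-1 / Real.sqrt 5, 2 / Real.sqrt 5),
      (-2 / Real.sqrt 5, -1 / Real.sqrt 5), (-1 / Real.sqrt 5, -2 / Real.sqrt 5)]) :
    IsGreatest {y : ℝ | ∃ w : ℝ × ℝ, w.1 ^ 2 + w.2 ^ 2 = 1 ∧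
      y = ⨅ i : Fin 16, Real.arccos (w.1 * (V i).1 + w.2 * (V i).2)}
      (Real.arctan (1 / 2) / 2) ∧
    Real.tan (Real.arctan (1 / 2) / 2) ^ 2 = (Real.sqrt 5 - 2) ^ 2 := by
  refine ⟨?_, by rw [tan_half_arctan_half]⟩
  have hpolar : V ∘ widthTwoIndex = polarDirection ∘ widthTwoAngle := by
    funext k
    rw [hV]
    fin_cases k <;> simp [widthTwoIndex, widthTwoAngle, polarDirection, neg_div, cos_arctan_half,
      sin_arctan_half, cos_add_pi_div_two, sin_add_pi_div_two, cos_pi_div_two_sub,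
      sin_pi_div_two_sub, sqrt_div_self', -one_div, -neg_sub, -neg_add_rev]
  exact (isDirectionalResolution_comp_iff_of_surjective widthTwoIndex_surjective).1
    (hpolar ▸ isDirectionalResolution_polarDirection_widthTwoAngle)
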